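/- Let G be a simple 2-connected graph with minimum degree δ. Then G has a cycle of length at least min{|V(G)|, 2δ}. -/

import Mathlib

open SimpleGraph

/-- An edge-cut of `G`: a set of edges of `G` whose deletion disconnects `G`. -/
def IsEdgeCut {V : Type*} (G : SimpleGraph V) (S : Set (Sym2 V)) : Prop :=
  S ⊆ G.edgeSet ∧ ¬ (G.deleteEdges S).Connected

/-- A bond: a minimal nonempty edge-cut. -/
def IsBond {V : Type*} (G : SimpleGraph V) (S : Set (Sym2 V)) : Prop :=
  S.Nonempty ∧ IsEdgeCut G S ∧ ∀ T ⊂ S, T.Nonempty → ¬ IsEdgeCut G T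

/-- A largest bond: a bond of maximum size. -/
def IsLargestBond {V : Type*} (G : SimpleGraph V) (S : Set (Sym2 V)) : Prop :=
  IsBond G S ∧ ∀ T, IsBond G T → T.ncard ≤ S.ncard

/-- The set of edges of `G` between `X` and its complement. -/
def crossEdges {V : Type*} (G : SimpleGraph V) (X : Set V) : Set (Sym2 V) :=
  {e ∈ G.edgeSet | ∃ x ∈ X, ∃ y ∈ Xᶜ, e = s(x, y)}

/-- `G` is 2-connected: at least 3 vertices and connected after deleting any ≤ 1 vertices. -/
def TwoConnected {V : Type*} (G : SimpleGraph V) : Prop :=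
  3 ≤ Nat.card V ∧ ∀ s : Set V, s.ncard ≤ 1 → (G.induce sᶜ).Connected

/-- `G` is 3-connected: at least 4 vertices and connected after deleting any ≤ 2 vertices. -/
def ThreeConnected {V : Type*} (G : SimpleGraph V) : Prop :=
  4 ≤ Nat.card V ∧ ∀ s : Set V, s.ncard ≤ 2 → (G.induce sᶜ).Connected

/-- A longest cycle of `G`. -/
def IsLongestCycle {V : Type*} (G : SimpleGraph V) {v : V} (C : G.Walk v v) : Prop :=
  C.IsCycle ∧ ∀ (u : V) (D : G.Walk u u), D.IsCycle → D.length ≤ C.length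

/-!
Let `P` be a longest path, from `u` to `v`; all neighbours of `u` and `v` lie on `P`, and as `G` is
connected, a cycle of length `|P| + 1` must be Hamiltonian. So assume `u` and `v` nonadjacent.

If `v` has a neighbour `xᵢ` on `P = x₀ … xₘ` that precedes a neighbour `xⱼ` of `u`, take such a
pair with `j - i` minimal. The cycle `u … xᵢ v … xⱼ u` misses only the vertices strictly between
`xᵢ` and `xⱼ`. If there are any, then by minimality none of them is adjacent to `u` or `v`, and no
`k` has both `xₖ` adjacent to `v` and `xₖ₊₁` adjacent to `u`; so the cycle has at least
`deg u + deg v` vertices.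

Otherwise the last neighbour `c` of `u` is not beyond the first neighbour `d` of `v`. Augment the
segment of `P` from `c` to `d` to two disjoint paths between the initial segment `u … c` and the
final segment `d … v`, one starting at `c` and one ending at `d`. Inside the initial segment, some
path joins the two starting points and passes through `u` and all its neighbours; likewise at the
other end, and the four paths form a cycle.
-/

section Walk

variable {V : Type*} {G : SimpleGraph V} {A : Set V} {u v w : V}

theorem exists_append_first_mem (p : G.Walk u v) (h : ∃ z ∈ p.support, z ∈ A) :
    ∃ (x : V) (q : G.Walk u x) (r : G.Walk x v), p = q.append r ∧ x ∈ A ∧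
      ∀ z ∈ q.support, z ∈ A → z = x := by
  induction p with
  | nil => exact ⟨_, .nil, .nil, rfl, by simpa using h, by simp⟩
  | @cons u w v huw p ih =>
    by_cases hu : u ∈ A
    · exact ⟨u, .nil, .cons huw p, rfl, hu, by simp⟩
    obtain ⟨x, q, r, rfl, hx, hq⟩ := ih (by simpa [hu] using h)
    refine ⟨x, .cons huw q, r, rfl, hx, fun z hz hzA ↦ ?_⟩
    rcases List.mem_cons.1 hz with rfl | hz
    · exact absurd hzA hu
    · exact hq z hz hzA

theorem exists_append_last_mem (p : G.Walk u v) (h : ∃ z ∈ p.support, z ∈ A) :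
    ∃ (x : V) (q : G.Walk u x) (r : G.Walk x v), p = q.append r ∧ x ∈ A ∧
      ∀ z ∈ r.support, z ∈ A → z = x := by
  obtain ⟨x, q, r, hp, hx, hq⟩ := exists_append_first_mem p.reverse (by simpa using h)
  refine ⟨x, r.reverse, q.reverse, ?_, hx, by simpa using hq⟩
  rw [← Walk.reverse_append, ← hp, Walk.reverse_reverse]

theorem start_notMem_tail_support {p : G.Walk u v} (hp : p.IsPath) : u ∉ p.support.tail := by
  have := hp.support_nodup
  rw [← p.cons_tail_support] at this
  exact (List.nodup_cons.1 this).1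

theorem isPath_append_iff {p : G.Walk u v} {q : G.Walk v w} :
    (p.append q).IsPath ↔ p.IsPath ∧ q.IsPath ∧ ∀ z ∈ p.support, z ∈ q.support → z = v := by
  refine ⟨fun h ↦ ⟨h.of_append_left, h.of_append_right, fun z hz hz' ↦ by_contra fun hne ↦
    h.ne_of_mem_support_of_append hne hz hz' rfl⟩, fun ⟨hp, hq, h⟩ ↦ .mk' ?_⟩
  rw [Walk.support_append, List.nodup_append']
  refine ⟨hp.support_nodup, hq.support_nodup.tail, fun z hz hz' ↦ start_notMem_tail_support hq ?_⟩
  exact h z hz (List.mem_of_mem_tail hz') ▸ hz'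

theorem isCycle_append_of_isPath {p : G.Walk u v} {q : G.Walk v u} (hp : p.IsPath) (hq : q.IsPath)
    (h : ∀ z ∈ p.support, z ∈ q.support → z = u ∨ z = v) (hlen : 1 < p.length ∨ 1 < q.length) :
    (p.append q).IsCycle := by
  refine hp.isCycle_append hq (fun z hz hz' ↦ ?_) hlen
  rcases h z (List.mem_of_mem_tail hz) (List.mem_of_mem_tail hz') with rfl | rfl
  · exact start_notMem_tail_support hp hz
  · exact start_notMem_tail_support hq hz'

theorem degree_le_length [Fintype (G.neighborSet w)] {p : G.Walk u v} (hw : w ∈ p.support)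
    (h : ∀ z, G.Adj w z → z ∈ p.support) : G.degree w ≤ p.length := by
  classical
  have hsub : insert w (G.neighborFinset w) ⊆ p.support.toFinset := by
    intro z hz
    rcases Finset.mem_insert.1 hz with rfl | hz
    · simpa
    · simpa using h z (by simpa using hz)
  have := (Finset.card_le_card hsub).trans p.support.toFinset_card_le
  rw [Finset.card_insert_of_notMem (by simp), G.card_neighborFinset_eq_degree,
    p.length_support] at this
  lia

end Walk

section DisjointPaths

variable {V : Type*} {G : SimpleGraph V} {A A' B B' : Set V} {u u' v v' a b x y : V}

/-- An `A`–`B` path: a path from a vertex of `A` to a vertex of `B` that meets `A` only in its first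
vertex and `B` only in its last. These are the paths counted in Menger's theorem; an `A`–`B` path
may be a single vertex of `A ∩ B`. -/
structure IsPathBetween (A B : Set V) (p : G.Walk u v) : Prop where
  isPath : p.IsPath
  start_mem : u ∈ A
  end_mem : v ∈ B
  eq_start : ∀ z ∈ p.support, z ∈ A → z = u
  eq_end : ∀ z ∈ p.support, z ∈ B → z = v

theorem IsPathBetween.mono_left {p : G.Walk u v} (hp : IsPathBetween A B p) (h : A' ⊆ A)
    (hu : u ∈ A') : IsPathBetween A' B p :=
  ⟨hp.isPath, hu, hp.end_mem, fun z hz hA ↦ hp.eq_start z hz (h hA), hp.eq_end⟩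

theorem exists_isPathBetween (p : G.Walk u v) (hu : u ∈ A) (hv : v ∈ B) :
    ∃ (x y : V) (q : G.Walk x y), IsPathBetween A B q ∧ q.support ⊆ p.support := by
  classical
  obtain ⟨y, q, q', hp, hy, hqB⟩ :=
    exists_append_first_mem p.bypass ⟨v, p.bypass.end_mem_support, hv⟩
  obtain ⟨x, r, r', rfl, hx, hrA⟩ := exists_append_last_mem q ⟨u, q.start_mem_support, hu⟩
  have hpath := p.bypass_isPath
  have hsub := p.support_bypass_subset_support
  rw [hp] at hpath hsub
  exact ⟨x, y, r', ⟨hpath.of_append_left.of_append_right, hx, hy, hrA,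
    fun z hz ↦ hqB z (by simp [hz])⟩, fun z hz ↦ hsub (by simp [hz])⟩

theorem IsPathBetween.append {p : G.Walk u x} {q : G.Walk x v} (hB : B ⊆ B')
    (hp : IsPathBetween A B' p) (hq : IsPathBetween (insert x A) B q)
    (hqB : ∀ z ∈ q.support, z ∈ B') : IsPathBetween A B (p.append q) where
  isPath := isPath_append_iff.2 ⟨hp.isPath, hq.isPath, fun z hz hz' ↦ hp.eq_end z hz (hqB z hz')⟩
  start_mem := hp.start_mem
  end_mem := hq.end_mem
  eq_start z hz hA := by
    rcases Walk.mem_support_append_iff .. |>.1 hz with hz | hz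
    · exact hp.eq_start z hz hA
    · obtain rfl := hq.eq_start z hz (Set.mem_insert_of_mem x hA)
      exact hp.eq_start z p.end_mem_support hA
  eq_end z hz hz' := by
    rcases Walk.mem_support_append_iff .. |>.1 hz with hz | hz
    · obtain rfl := hp.eq_end z hz (hB hz')
      exact hq.eq_end z q.start_mem_support hz'
    · exact hq.eq_end z hz hz'

theorem IsPathBetween.of_append_right {p : G.Walk u x} {q : G.Walk x v}
    (h : IsPathBetween A B (p.append q)) : IsPathBetween (insert x A) B q where
  isPath := h.isPath.of_append_right
  start_mem := Set.mem_insert x A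
  end_mem := h.end_mem
  eq_start z hz hA := by
    rcases hA with rfl | hA
    · rfl
    · have := h.eq_start z (by simp [hz]) hA
      subst this
      exact (isPath_append_iff.1 h.isPath).2.2 z p.start_mem_support hz
  eq_end z hz := h.eq_end z (by simp [hz])

theorem isPathBetween_nil (hA : u ∈ A) (hB : u ∈ B) : IsPathBetween A B (Walk.nil : G.Walk u u) :=
  ⟨.nil, hA, hB, by simp, by simp⟩

/-- There are two disjoint `A`–`B` paths in `G`, one from `u` to `v` and one from `u'` to `v'`. The
paths themselves are existentially bound: only their end vertices are tracked. -/
def DisjointlyLinked (G : SimpleGraph V) (A B : Set V) (u v u' v' : V) : Prop :=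
  ∃ (p : G.Walk u v) (q : G.Walk u' v'),
    IsPathBetween A B p ∧ IsPathBetween A B q ∧ p.support.Disjoint q.support

theorem DisjointlyLinked.symm (h : DisjointlyLinked G A B u v u' v') :
    DisjointlyLinked G A B u' v' u v :=
  let ⟨p, q, hp, hq, hpq⟩ := h
  ⟨q, p, hq, hp, hpq.symm⟩

theorem DisjointlyLinked.ne_start (h : DisjointlyLinked G A B u v u' v') : u ≠ u' := by
  obtain ⟨p, q, -, -, hpq⟩ := h
  rintro rfl
  exact hpq p.start_mem_support q.start_mem_support

theorem DisjointlyLinked.ne_end (h : DisjointlyLinked G A B u v u' v') : v ≠ v' := by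
  obtain ⟨p, q, -, -, hpq⟩ := h
  rintro rfl
  exact hpq p.end_mem_support q.end_mem_support

theorem DisjointlyLinked.extend {p : G.Walk x v} {q : G.Walk y v'}
    (h : DisjointlyLinked G A B' u x u' y) (hB : B ⊆ B')
    (hp : IsPathBetween (insert x A) B p) (hq : IsPathBetween (insert y A) B q)
    (hpB : ∀ z ∈ p.support, z ∈ B') (hqB : ∀ z ∈ q.support, z ∈ B')
    (hpq : p.support.Disjoint q.support) : DisjointlyLinked G A B u v u' v' := by
  obtain ⟨r, s, hr, hs, hrs⟩ := h
  refine ⟨r.append p, s.append q, hr.append hB hp hpB, hs.append hB hq hqB, fun z hz hz' ↦ ?_⟩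
  rw [Walk.mem_support_append_iff] at hz hz'
  rcases hz with hz | hz <;> rcases hz' with hz' | hz'
  · exact hrs hz hz'
  · obtain rfl := hr.eq_end z hz (hqB z hz')
    exact hpq p.start_mem_support hz'
  · obtain rfl := hs.eq_end z hz' (hpB z hz)
    exact hpq hz q.start_mem_support
  · exact hpq hz hz'

theorem DisjointlyLinked.extend_of_mem_branch {p : G.Walk x v} {q : G.Walk x v'}
    (h : DisjointlyLinked G A B' u x u' y) (hB : B ⊆ B') (hp : IsPathBetween (insert x A) B p)
    (hq : IsPathBetween (insert x A) B q) (hpB : ∀ z ∈ p.support, z ∈ B')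
    (hqB : ∀ z ∈ q.support, z ∈ B') (hpq : ∀ z ∈ p.support, z ∈ q.support → z = x)
    (hy : y ∈ q.support) : DisjointlyLinked G A B u v u' v' := by
  obtain ⟨q₁, q₂, -, -, rfl⟩ := hq.isPath.mem_support_iff_exists_append.1 hy
  have hxy : x ∉ q₂.support := fun hx ↦
    h.ne_end ((isPath_append_iff.1 hq.isPath).2.2 x q₁.start_mem_support hx)
  refine h.extend (q := q₂) hB hp ?_ hpB (fun z hz ↦ hqB z ?_) fun z hz hz' ↦ hxy ?_
  · exact hq.of_append_right.mono_left (Set.insert_subset_insert (Set.subset_insert x A)) (by simp)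
  · exact Walk.mem_support_append_iff .. |>.2 (.inr hz)
  · exact hpq z hz (by simp [hz']) ▸ hz'

theorem DisjointlyLinked.exists_of_fork {p : G.Walk x v} {q : G.Walk x v'}
    (h : DisjointlyLinked G A (B ∪ {z | z ∈ p.support ∨ z ∈ q.support}) u x u' y)
    (hp : IsPathBetween (insert x A) B p) (hq : IsPathBetween (insert x A) B q)
    (hpq : ∀ z ∈ p.support, z ∈ q.support → z = x) :
    ∃ w, DisjointlyLinked G A B u v u' w ∨ DisjointlyLinked G A B u w u' v := by
  have hB : B ⊆ B ∪ {z | z ∈ p.support ∨ z ∈ q.support} := Set.subset_union_left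
  have hpB : ∀ z ∈ p.support, z ∈ B ∪ {z | z ∈ p.support ∨ z ∈ q.support} :=
    fun z hz ↦ .inr (.inl hz)
  have hqB : ∀ z ∈ q.support, z ∈ B ∪ {z | z ∈ p.support ∨ z ∈ q.support} :=
    fun z hz ↦ .inr (.inr hz)
  by_cases hyp : y ∈ p.support
  · exact ⟨v', .inr (h.extend_of_mem_branch hB hq hp hqB hpB (fun z hz hz' ↦ hpq z hz' hz) hyp)⟩
  by_cases hyq : y ∈ q.support
  · exact ⟨v', .inl (h.extend_of_mem_branch hB hp hq hpB hqB hpq hyq)⟩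
  have hyB : y ∈ B := by
    obtain ⟨-, r, -, hr, -⟩ := h
    exact hr.end_mem.resolve_right (not_or_intro hyp hyq)
  exact ⟨y, .inl (h.extend hB hp (isPathBetween_nil (by simp) hyB) hpB
    (by simpa using hB hyB) (by simpa using hyp))⟩

/-- The step from one to two paths in Menger's theorem, by the argument of Böhme, Göring and Harant:
a path that avoids `b` leaves `P` for the last time at a vertex `x`; enlarge `B` by the two branches
from `x` to `B` and induct on the now shorter path `P`. -/
theorem exists_disjointlyLinked (hAB : ∀ w, ∃ u ∈ A, ∃ v ∈ B, ∃ p : G.Walk u v, w ∉ p.support)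
    {P : G.Walk a b} (hP : IsPathBetween A B P) :
    ∃ u u' v, DisjointlyLinked G A B u b u' v ∧ (a = u ∨ a = u') := by
  induction hn : P.length using Nat.strong_induction_on generalizing B b P with | _ n ih
  subst hn
  obtain ⟨s, hs, t, ht, p, hbp⟩ := hAB b
  obtain ⟨x, r, R, hR, hRp⟩ := exists_isPathBetween (A := A ∪ {z | z ∈ P.support}) p (.inl hs) ht
  by_cases hx : x ∉ P.support
  · have hxA : x ∈ A := hR.start_mem.resolve_right hx
    refine ⟨a, x, r, ⟨P, R, hP, hR.mono_left Set.subset_union_left hxA, fun z hz hz' ↦ hx ?_⟩,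
      .inl rfl⟩
    exact hR.eq_start z hz' (.inr hz) ▸ hz
  obtain ⟨P₁, P₂, -, -, rfl⟩ := hP.isPath.mem_support_iff_exists_append.1 (not_not.1 hx)
  have hP₁₂ := (isPath_append_iff.1 hP.isPath).2.2
  have hP₁ : IsPathBetween A (B ∪ {z | z ∈ P₂.support ∨ z ∈ R.support}) P₁ := by
    refine ⟨hP.isPath.of_append_left, hP.start_mem, .inr (.inr R.start_mem_support),
      fun z hz ↦ hP.eq_start z (by simp [hz]), fun z hz hzB ↦ ?_⟩
    rcases hzB with hzB | hzP | hzR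
    · exact hP₁₂ z hz (hP.eq_end z (by simp [hz]) hzB ▸ P₂.end_mem_support)
    · exact hP₁₂ z hz hzP
    · exact hR.eq_start z hzR (.inr (by simp [hz]))
  have hlt : P₁.length < (P₁.append P₂).length := by
    have hxb : x ≠ b := fun h ↦ hbp (hRp (h ▸ R.start_mem_support))
    have : P₂.length ≠ 0 := fun h ↦ hxb (Walk.eq_of_length_eq_zero h)
    rw [Walk.length_append]
    lia
  obtain ⟨u, u', y, hQ, ha⟩ := ih _ hlt (fun w ↦
    let ⟨u, hu, v, hv, p, hp⟩ := hAB w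
    ⟨u, hu, v, .inl hv, p, hp⟩) hP₁ rfl
  have hR' : IsPathBetween (insert x A) B R :=
    hR.mono_left (Set.insert_subset (.inr (by simp)) Set.subset_union_left) (by simp)
  obtain ⟨w, h | h⟩ := hQ.exists_of_fork hP.of_append_right hR' fun z hz hzR ↦
    hR.eq_start z hzR (.inr (by simp [hz]))
  · exact ⟨u, u', w, h, ha⟩
  · exact ⟨u', u, w, h.symm, ha.symm⟩

end DisjointPaths

section TwoConnected

variable {V : Type*} {G : SimpleGraph V} {A B : Set V} {a b u v w : V}

theorem TwoConnected.connected (h : TwoConnected G) : G.Connected := by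
  have := h.2 ∅ (by simp)
  rw [Set.compl_empty] at this
  exact (induceUnivIso G).connected_iff.1 this

theorem TwoConnected.exists_walk_notMem (h : TwoConnected G) (hu : u ≠ w) (hv : v ≠ w) :
    ∃ p : G.Walk u v, w ∉ p.support := by
  have hmem {z : V} (hz : z ≠ w) : z ∈ ({w}ᶜ : Set V) := hz
  obtain ⟨p⟩ := (h.2 {w} (by simp)).preconnected ⟨u, hmem hu⟩ ⟨v, hmem hv⟩
  refine ⟨p.map (Embedding.induce _).toHom, fun hw ↦ ?_⟩
  obtain ⟨z, -, hz⟩ := List.mem_map.1 (Walk.support_map _ _ ▸ hw)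
  exact z.2 hz

theorem TwoConnected.exists_ne_ne (h : TwoConnected G) (u v : V) : ∃ w, w ≠ u ∧ w ≠ v := by
  by_contra! hall
  have huniv : (Set.univ : Set V) ⊆ {u, v} := fun w _ ↦ or_iff_not_imp_left.2 (hall w)
  have hcard := (Set.ncard_le_ncard huniv).trans (Set.ncard_insert_le u {v})
  rw [Set.ncard_univ, Set.ncard_singleton] at hcard
  exact absurd h.1 (by lia)

theorem TwoConnected.exists_adj_ne (h : TwoConnected G) (hvw : v ≠ w) : ∃ x ≠ w, G.Adj v x := by
  obtain ⟨x, hxv, hxw⟩ := h.exists_ne_ne v w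
  have : Nontrivial ({w}ᶜ : Set V) :=
    ⟨⟨v, hvw⟩, ⟨x, hxw⟩, fun hvx ↦ hxv (congrArg Subtype.val hvx).symm⟩
  obtain ⟨y, hy⟩ := (h.2 {w} (by simp)).preconnected.exists_adj_of_nontrivial ⟨v, hvw⟩
  exact ⟨y, y.2, hy⟩

theorem TwoConnected.two_le_degree (h : TwoConnected G) (v : V) [Fintype (G.neighborSet v)] :
    2 ≤ G.degree v := by
  obtain ⟨w, hwv, -⟩ := h.exists_ne_ne v v
  obtain ⟨x, -, hx⟩ := h.exists_adj_ne hwv.symm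
  obtain ⟨y, hyx, hy⟩ := h.exists_adj_ne hx.ne
  rw [← G.card_neighborFinset_eq_degree]
  exact Finset.one_lt_card.2 ⟨y, by simpa, x, by simpa, hyx⟩

theorem TwoConnected.exists_disjointlyLinked (h : TwoConnected G) (hA : A.Nontrivial)
    (hB : B.Nontrivial) {P : G.Walk a b} (hP : IsPathBetween A B P) :
    ∃ u u' v, DisjointlyLinked G A B u b u' v ∧ (a = u ∨ a = u') := by
  refine _root_.exists_disjointlyLinked (fun w ↦ ?_) hP
  obtain ⟨u, hu, huw⟩ := hA.exists_ne w
  obtain ⟨v, hv, hvw⟩ := hB.exists_ne w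
  obtain ⟨p, hp⟩ := h.exists_walk_notMem huw hvw
  exact ⟨u, hu, v, hv, p, hp⟩

end TwoConnected

section Cycles

variable {V : Type*} {G : SimpleGraph V} {A B : Set V} {x x' y y' c s u : V}

/-- The path `q` runs from `c` back to the first neighbour of `u` after `s`, jumps to `u`, and then
follows `p` up to `s`. -/
theorem exists_isPath_through_neighbors {p : G.Walk u c} (hp : p.IsPath) (huc : G.Adj u c)
    (hs : s ∈ p.support) (hsc : s ≠ c) :
    ∃ q : G.Walk c s, q.IsPath ∧ q.support ⊆ p.support ∧ u ∈ q.support ∧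
      ∀ w ∈ p.support, G.Adj u w → w ∈ q.support := by
  obtain ⟨p₁, p₂, -, -, rfl⟩ := hp.mem_support_iff_exists_append.1 hs
  cases p₂ with
  | nil => exact absurd rfl hsc
  | @cons s t c hst r =>
  obtain ⟨b, r₁, r₂, rfl, hub, hr₁⟩ :=
    exists_append_first_mem (A := G.neighborSet u) r ⟨c, r.end_mem_support, huc⟩
  obtain ⟨hp₁, hst', hp₁s⟩ := isPath_append_iff.1 hp
  obtain ⟨hr, hsr⟩ := (Walk.cons_isPath_iff ..).1 hst'
  have hp₁r₂ : ∀ z ∈ r₂.support, z ∉ p₁.support := fun z hz hz' ↦ by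
    obtain rfl := hp₁s z hz' (by simp [hz])
    simp [hz] at hsr
  have hqpath : (r₂.reverse.append (.cons hub.symm p₁)).IsPath := by
    refine isPath_append_iff.2 ⟨hr.of_append_right.reverse, hp₁.cons (hp₁r₂ b (by simp)), ?_⟩
    intro z hz hz'
    rcases List.mem_cons.1 hz' with rfl | hz'
    · rfl
    · exact absurd hz' (hp₁r₂ z (by simpa using hz))
  refine ⟨_, hqpath, fun z hz ↦ ?_, by simp, fun w hw huw ↦ ?_⟩
  · have hb := r₂.start_mem_support
    simp only [Walk.mem_support_append_iff, Walk.support_cons, Walk.support_reverse,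
      List.mem_reverse, List.mem_cons] at hz ⊢
    grind
  · have hs := p₁.end_mem_support
    have hwb : w ∈ r₁.support → w = b := fun hw ↦ hr₁ w hw huw
    simp only [Walk.mem_support_append_iff, Walk.support_cons, Walk.support_reverse,
      List.mem_reverse, List.mem_cons] at hw ⊢
    grind

theorem DisjointlyLinked.exists_isCycle (h : DisjointlyLinked G A B x x' y y')
    (hAB : ∀ z ∈ A, z ∈ B → z = x ∨ z = y) {p : G.Walk x y} (hp : p.IsPath)
    (hpA : ∀ z ∈ p.support, z ∈ A) {q : G.Walk x' y'} (hq : q.IsPath)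
    (hqB : ∀ z ∈ q.support, z ∈ B) (hlen : 1 < p.length) :
    ∃ (z : V) (C : G.Walk z z), C.IsCycle ∧ p.length + q.length ≤ C.length := by
  obtain ⟨r, s, hr, hs, hrs⟩ := h
  have hps : (p.append s).IsPath :=
    isPath_append_iff.2 ⟨hp, hs.isPath, fun z hz hz' ↦ hs.eq_start z hz' (hpA z hz)⟩
  have hqr : (q.reverse.append r.reverse).IsPath := by
    refine isPath_append_iff.2 ⟨hq.reverse, hr.isPath.reverse, fun z hz hz' ↦ ?_⟩
    exact hr.eq_end z (by simpa using hz') (hqB z (by simpa using hz))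
  refine ⟨x, (p.append s).append (q.reverse.append r.reverse),
    isCycle_append_of_isPath hps hqr (fun z hz hz' ↦ ?_) (.inl ?_), ?_⟩
  · simp only [Walk.mem_support_append_iff, Walk.support_reverse, List.mem_reverse] at hz hz'
    rcases hz with hz | hz <;> rcases hz' with hz' | hz'
    · refine (hAB z (hpA z hz) (hqB z hz')).imp_right ?_
      rintro rfl
      exact hs.eq_end z s.start_mem_support (hqB z hz')
    · exact .inl (hr.eq_start z hz' (hpA z hz))
    · exact .inr (hs.eq_end z hz (hqB z hz'))
    · exact absurd hz (hrs hz')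
  · rw [Walk.length_append]
    lia
  · simp only [Walk.length_append, Walk.length_reverse]
    lia

end Cycles

section NoCrossing

variable {V : Type*} {G : SimpleGraph V} [G.LocallyFinite] {c d u v : V}

theorem TwoConnected.exists_isCycle_of_neighbors_separated (h2 : TwoConnected G) {p : G.Walk u c}
    {q : G.Walk c d} {r : G.Walk d v} (hpath : (p.append (q.append r)).IsPath) (huc : G.Adj u c)
    (hvd : G.Adj v d) (hu : ∀ w, G.Adj u w → w ∈ p.support)
    (hv : ∀ w, G.Adj v w → w ∈ r.support) :
    ∃ (z : V) (C : G.Walk z z), C.IsCycle ∧ G.degree u + G.degree v ≤ C.length := by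
  obtain ⟨hp, hqr, hpqr⟩ := isPath_append_iff.1 hpath
  obtain ⟨hq, hr, hqr⟩ := isPath_append_iff.1 hqr
  have hqAB : IsPathBetween {z | z ∈ p.support} {z | z ∈ r.support} q :=
    ⟨hq, p.end_mem_support, r.start_mem_support, fun z hz hzA ↦ hpqr z hzA (by simp [hz]), hqr⟩
  obtain ⟨x, y, y', hlink, hc⟩ := h2.exists_disjointlyLinked
    ⟨u, p.start_mem_support, c, p.end_mem_support, huc.ne⟩
    ⟨v, r.end_mem_support, d, r.start_mem_support, hvd.ne⟩ hqAB
  obtain ⟨hx, hy, hy'⟩ : x ∈ p.support ∧ y ∈ p.support ∧ y' ∈ r.support := by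
    obtain ⟨_, _, h, h', -⟩ := hlink
    exact ⟨h.start_mem, h'.start_mem, h'.end_mem⟩
  obtain ⟨s, hs, hsr, hvs, hNv⟩ :=
    exists_isPath_through_neighbors hr.reverse hvd (by simpa using hy') hlink.ne_end.symm
  obtain ⟨t, ht, htp, hut, hNu⟩ : ∃ t : G.Walk x y, t.IsPath ∧ t.support ⊆ p.support ∧
      u ∈ t.support ∧ ∀ w ∈ p.support, G.Adj u w → w ∈ t.support := by
    rcases hc with rfl | rfl
    · exact exists_isPath_through_neighbors hp huc hy hlink.ne_start.symm
    · obtain ⟨t, ht, htp, hut, hNu⟩ := exists_isPath_through_neighbors hp huc hx hlink.ne_start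
      exact ⟨t.reverse, ht.reverse, by simpa using htp, by simpa using hut, by simpa using hNu⟩
  have hdu : G.degree u ≤ t.length := degree_le_length hut fun w hw ↦ hNu w (hu w hw) hw
  have hdv : G.degree v ≤ s.length :=
    degree_le_length hvs fun w hw ↦ hNv w (by simpa using hv w hw) hw
  have hprxy : ∀ z ∈ p.support, z ∈ r.support → z = x ∨ z = y := fun z hzp hzr ↦
    hpqr z hzp (by simp [hzr]) ▸ hc
  have hsrB : ∀ z ∈ s.support, z ∈ r.support := fun z hz ↦ by simpa using hsr hz
  obtain ⟨z, C, hC, hlen⟩ := hlink.exists_isCycle hprxy ht htp hs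
    hsrB ((h2.two_le_degree u).trans hdu)
  exact ⟨z, C, hC, (add_le_add hdu hdv).trans hlen⟩

end NoCrossing

section Crossing

variable {V : Type*} {G : SimpleGraph V} {u v : V}

theorem exists_mem_eq_or_card_add_card_le {m i j : ℕ} {S T : Finset ℕ} (hS : S ⊆ Finset.range m)
    (hT : T ⊆ Finset.range m) (hi : i ∈ T) (hj : j ∈ S) (hij : i ≤ j) :
    ∃ i ∈ T, ∃ j ∈ S, i ≤ j ∧ (i = j ∨ S.card + T.card ≤ i + (m - j) + 1) := by
  obtain ⟨⟨i, j⟩, hmem, hmin⟩ := Finset.exists_min_image {k ∈ T ×ˢ S | k.1 ≤ k.2}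
    (fun k ↦ k.2 - k.1) ⟨(i, j), by simp [hi, hj, hij]⟩
  simp only [Finset.mem_filter, Finset.mem_product, and_imp, Prod.forall] at hmem hmin
  obtain ⟨⟨hi, hj⟩, hij⟩ := hmem
  refine ⟨i, hi, j, hj, hij, or_iff_not_imp_left.2 fun hne ↦ ?_⟩
  have hdisj : Disjoint S T := Finset.disjoint_left.2 fun k hkS hkT ↦ by
    have := hmin k k hkT hkS le_rfl
    lia
  have hsub : S ∪ T ⊆ Finset.range (i + 1) ∪ Finset.Ico j m := by
    intro k hk
    rw [Finset.mem_union, Finset.mem_range, Finset.mem_Ico]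
    rcases Finset.mem_union.1 hk with hk | hk
    · have := hmin i k hi hk
      have := Finset.mem_range.1 (hS hk)
      lia
    · have := hmin k j hk hj
      have := Finset.mem_range.1 (hT hk)
      lia
  calc S.card + T.card = (S ∪ T).card := (Finset.card_union_of_disjoint hdisj).symm
    _ ≤ (Finset.range (i + 1) ∪ Finset.Ico j m).card := Finset.card_le_card hsub
    _ ≤ (Finset.range (i + 1)).card + (Finset.Ico j m).card := Finset.card_union_le _ _
    _ = i + (m - j) + 1 := by rw [Finset.card_range, Nat.card_Ico]; lia

theorem disjoint_support_take_drop {P : G.Walk u v} (hP : P.IsPath) {i j : ℕ} (hij : i < j)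
    (hj : j ≤ P.length) : (P.take i).support.Disjoint (P.drop j).support := by
  intro z hz hz'
  obtain ⟨a, rfl, ha⟩ := Walk.mem_support_iff_exists_getVert.1 hz
  obtain ⟨b, hb, hbl⟩ := Walk.mem_support_iff_exists_getVert.1 hz'
  rw [Walk.take_length] at ha
  rw [Walk.drop_length] at hbl
  rw [Walk.take_getVert, Walk.drop_getVert] at hb
  have := hP.getVert_injOn (show j + b ≤ P.length by lia) (show i ⊓ a ≤ P.length by lia) hb
  lia

theorem exists_isCycle_of_adj_getVert {P : G.Walk u v} (hP : P.IsPath) {i j : ℕ} (hi : i ≠ 0)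
    (hij : i < j) (hj : j ≤ P.length) (hvi : G.Adj v (P.getVert i))
    (huj : G.Adj u (P.getVert j)) :
    ∃ (z : V) (C : G.Walk z z), C.IsCycle ∧ C.length = i + (P.length - j) + 2 := by
  set p := P.take i
  set q := (P.drop j).reverse
  have hpq : ∀ z ∈ p.support, z ∉ q.support := fun z hz hz' ↦
    disjoint_support_take_drop hP hij hj hz
      (by rwa [Walk.support_reverse, List.mem_reverse] at hz')
  have hp : p.IsPath := hP.take i
  have hpi : p.length = i := by rw [Walk.take_length]; lia
  have hiu : u ≠ P.getVert i := fun h ↦ hi ((hP.getVert_eq_start_iff (by lia)).1 h.symm)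
  have hr : ((Walk.cons hvi.symm q).concat huj.symm).IsPath := by
    refine ((hP.drop j).reverse.cons (hpq _ p.end_mem_support)).concat ?_ _
    rw [Walk.support_cons, List.mem_cons, not_or]
    exact ⟨hiu, hpq u p.start_mem_support⟩
  refine ⟨u, p.append ((Walk.cons hvi.symm q).concat huj.symm), isCycle_append_of_isPath hp hr
    (fun z hzp hzr ↦ ?_) (.inr ?_), ?_⟩
  · have := hpq z hzp
    simp only [Walk.support_concat, Walk.support_cons, List.mem_append, List.mem_cons,
      List.not_mem_nil, or_false] at hzr
    tauto
  · simp
  · simp [q, hpi]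
    lia

theorem degree_le_card_of_forall_adj [Fintype (G.neighborSet v)] {ι : Type*} {s : Finset ι}
    {f : ι → V} (h : ∀ w, G.Adj v w → ∃ i ∈ s, f i = w) : G.degree v ≤ s.card := by
  classical
  rw [← G.card_neighborFinset_eq_degree]
  exact (Finset.card_le_card fun w hw ↦ Finset.mem_image.2 (h w (by simpa using hw))).trans
    (Finset.card_image_le (f := f))

theorem exists_isCycle_of_neighbors_cross [G.LocallyFinite] {P : G.Walk u v} (hP : P.IsPath)
    (hu : ∀ w, G.Adj u w → w ∈ P.support) (hv : ∀ w, G.Adj v w → w ∈ P.support)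
    (huv : ¬G.Adj u v) {i j : ℕ} (hij : i < j) (hj : j ≤ P.length) (hvi : G.Adj v (P.getVert i))
    (huj : G.Adj u (P.getVert j)) :
    ∃ (z : V) (C : G.Walk z z), C.IsCycle ∧
      (C.length = P.length + 1 ∨ G.degree u + G.degree v ≤ C.length) := by
  classical
  set S := {k ∈ Finset.range P.length | G.Adj u (P.getVert (k + 1))}
  set T := {k ∈ Finset.range P.length | G.Adj v (P.getVert k)}
  have hS : G.degree u ≤ S.card := degree_le_card_of_forall_adj (f := fun k ↦ P.getVert (k + 1))
    fun w hw ↦ by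
      obtain ⟨n, rfl, hn⟩ := Walk.mem_support_iff_exists_getVert.1 (hu w hw)
      have hn0 : n ≠ 0 := by rintro rfl; simp at hw
      obtain ⟨k, rfl⟩ := Nat.exists_eq_succ_of_ne_zero hn0
      exact ⟨k, by simp [S, hw]; lia, rfl⟩
  have hT : G.degree v ≤ T.card := degree_le_card_of_forall_adj (f := P.getVert) fun w hw ↦ by
    obtain ⟨n, rfl, hn⟩ := Walk.mem_support_iff_exists_getVert.1 (hv w hw)
    have hnm : n ≠ P.length := by rintro rfl; simp at hw
    exact ⟨n, by simp [T, hw]; lia, rfl⟩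
  obtain ⟨i, hi, j, hj, hij, hgap⟩ := exists_mem_eq_or_card_add_card_le (i := i) (j := j - 1)
    (Finset.filter_subset _ _ : S ⊆ _) (Finset.filter_subset _ _ : T ⊆ _)
    (by simp [hvi]; lia) (by simp [show j - 1 + 1 = j by lia, huj]; lia) (by lia)
  obtain ⟨hjm, huj⟩ := Finset.mem_filter.1 hj
  have hvi := (Finset.mem_filter.1 hi).2
  have hi0 : i ≠ 0 := by
    rintro rfl
    exact huv (by simpa using hvi.symm)
  have hjm := Finset.mem_range.1 hjm
  obtain ⟨z, C, hC, hlen⟩ :=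
    exists_isCycle_of_adj_getVert hP hi0 (Nat.lt_succ_iff.2 hij) hjm hvi huj
  exact ⟨z, C, hC, hgap.imp (by lia) (by lia)⟩

end Crossing

section LongestPath

variable {V : Type*} {G : SimpleGraph V} {u v : V}

theorem exists_isPath_length_eq_of_isCycle (hG : G.Connected) {C : G.Walk u u} (hC : C.IsCycle)
    (hv : v ∉ C.support) :
    ∃ (x y : V) (p : G.Walk x y), p.IsPath ∧ p.length = C.length := by
  classical
  obtain ⟨w⟩ := hG.preconnected u v
  obtain ⟨d, -, hd, hd'⟩ := w.exists_boundary_dart {z | z ∈ C.support} C.start_mem_support hv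
  have hrot := hC.rotate hd
  refine ⟨_, _, (C.rotate d.fst hd).tail.concat d.adj, ?_, ?_⟩
  · refine hrot.isPath_tail.concat (fun h ↦ hd' ?_) d.adj
    rw [Walk.support_tail_of_not_nil _ hrot.not_nil] at h
    exact (Walk.mem_support_rotate_iff ..).1 (List.mem_of_mem_tail h)
  · have := Walk.length_tail_add_one hrot.not_nil
    simpa using this

theorem card_le_length_of_isCycle [Fintype V] (hG : G.Connected) {C : G.Walk u u} (hC : C.IsCycle)
    (hmax : ∀ (x y : V) (p : G.Walk x y), p.IsPath → p.length < C.length) :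
    Fintype.card V ≤ C.length := by
  classical
  have hmem (v : V) : v ∈ C.support.tail.toFinset := by
    by_contra hv
    have hvC : v ∉ C.support := fun h ↦ by
      rcases (Walk.mem_support_iff ..).1 h with rfl | h
      · exact hv (by simpa using Walk.end_mem_tail_support hC.not_nil)
      · exact hv (by simpa using h)
    obtain ⟨x, y, p, hp, hlen⟩ := exists_isPath_length_eq_of_isCycle hG hC hvC
    exact (hmax x y p hp).ne hlen
  calc Fintype.card V = C.support.tail.toFinset.card := by
        rw [Finset.eq_univ_of_forall hmem, Finset.card_univ]
    _ ≤ C.support.tail.length := C.support.tail.toFinset_card_le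
    _ = C.length := by simp

end LongestPath

section Circumference

variable {V : Type*} {G : SimpleGraph V} {u v : V}

theorem exists_isCycle_of_isPath_of_adj {P : G.Walk u v} (hP : P.IsPath) (hlen : 1 < P.length)
    (huv : G.Adj u v) : ∃ (z : V) (C : G.Walk z z), C.IsCycle ∧ C.length = P.length + 1 :=
  ⟨u, P.concat huv.symm, P.concat_eq_append huv.symm ▸ isCycle_append_of_isPath hP
    (.of_adj huv.symm) (by simp +contextual [or_comm]) (.inl hlen), P.length_concat _⟩

theorem TwoConnected.exists_isCycle_of_neighbors_subset [G.LocallyFinite] (h2 : TwoConnected G)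
    {P : G.Walk u v} (hP : P.IsPath) (hu : ∀ w, G.Adj u w → w ∈ P.support)
    (hv : ∀ w, G.Adj v w → w ∈ P.support) (huv : ¬G.Adj u v) :
    ∃ (z : V) (C : G.Walk z z), C.IsCycle ∧
      (C.length = P.length + 1 ∨ G.degree u + G.degree v ≤ C.length) := by
  have hadj (z : V) : ∃ w, G.Adj z w :=
    (G.degree_pos_iff_exists_adj z).1 (two_pos.trans_le (h2.two_le_degree z))
  obtain ⟨c, p, Q, rfl, huc, hQ⟩ := exists_append_last_mem (A := G.neighborSet u) P
    ((hadj u).imp fun w hw ↦ ⟨hu w hw, hw⟩)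
  by_cases hvQ : ∀ w, G.Adj v w → w ∈ Q.support
  · obtain ⟨d, q, r, rfl, hvd, hq⟩ := exists_append_first_mem (A := G.neighborSet v) Q
      ((hadj v).imp fun w hw ↦ ⟨hvQ w hw, hw⟩)
    obtain ⟨z, C, hC, hlen⟩ := h2.exists_isCycle_of_neighbors_separated hP huc hvd
      (fun w hw ↦ ((Walk.mem_support_append_iff ..).1 (hu w hw)).elim id
        fun hwQ ↦ hQ w hwQ hw ▸ p.end_mem_support)
      (fun w hw ↦ ((Walk.mem_support_append_iff ..).1 (hvQ w hw)).elim
        (fun hwq ↦ hq w hwq hw ▸ r.start_mem_support) id)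
    exact ⟨z, C, hC, .inr hlen⟩
  · push Not at hvQ
    obtain ⟨w, hvw, hwQ⟩ := hvQ
    have hwp := ((Walk.mem_support_append_iff ..).1 (hv w hvw)).resolve_right hwQ
    obtain ⟨i, rfl, hi⟩ := Walk.mem_support_iff_exists_getVert.1 hwp
    have hip : i < p.length := hi.lt_of_ne fun h ↦ hwQ (by simp [h])
    exact exists_isCycle_of_neighbors_cross hP hu hv huv hip (by simp)
      (by rwa [Walk.getVert_append, if_pos hip]) (by simpa [Walk.getVert_append] using huc)

theorem adj_start_mem_support_of_forall_length_le {P : G.Walk u v} (hP : P.IsPath)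
    (hmax : ∀ (x y : V) (p : G.Walk x y), p.IsPath → p.length ≤ P.length) {w : V}
    (hw : G.Adj u w) : w ∈ P.support := by
  by_contra hwP
  have := hmax _ _ _ (hP.cons (h := hw.symm) hwP)
  rw [Walk.length_cons] at this
  lia

/-- The Ore-type strengthening due to Bermond and Linial. -/
theorem dirac_circumference_general [Fintype V] [G.LocallyFinite] (h2 : TwoConnected G) {k : ℕ}
    (hk : ∀ u v, u ≠ v → ¬G.Adj u v → k ≤ G.degree u + G.degree v) :
    ∃ (v : V) (C : G.Walk v v), C.IsCycle ∧ min (Fintype.card V) k ≤ C.length := by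
  have := h2.connected.nonempty
  obtain ⟨u, v, P, hP, hmax⟩ := Walk.exists_isPath_forall_isPath_length_le_length G
  have hu (w : V) : G.Adj u w → w ∈ P.support := adj_start_mem_support_of_forall_length_le hP hmax
  have hv (w : V) (hw : G.Adj v w) : w ∈ P.support := by
    simpa using adj_start_mem_support_of_forall_length_le hP.reverse (by simpa using hmax) hw
  have hlen : 1 < P.length := (h2.two_le_degree u).trans (degree_le_length P.start_mem_support hu)
  have hne : u ≠ v := by
    rintro rfl
    simp [Walk.length_eq_zero_iff.2 (Walk.isPath_iff_nil.1 hP)] at hlen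
  obtain ⟨z, C, hC, h | h⟩ : ∃ (z : V) (C : G.Walk z z), C.IsCycle ∧
      (C.length = P.length + 1 ∨ k ≤ C.length) := by
    by_cases huv : G.Adj u v
    · obtain ⟨z, C, hC, h⟩ := exists_isCycle_of_isPath_of_adj hP hlen huv
      exact ⟨z, C, hC, .inl h⟩
    · obtain ⟨z, C, hC, h⟩ := h2.exists_isCycle_of_neighbors_subset hP hu hv huv
      exact ⟨z, C, hC, h.imp_right (hk u v hne huv).trans⟩
  · exact ⟨z, C, hC, min_le_of_left_le (card_le_length_of_isCycle h2.connected hC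
      fun x y p hp ↦ h ▸ Nat.lt_succ_of_le (hmax x y p hp))⟩
  · exact ⟨z, C, hC, min_le_of_right_le h⟩

end Circumference

/-- Dirac: a simple 2-connected graph with minimum degree `δ` has a cycle of
length at least `min |V(G)| (2δ)`. -/
theorem dirac_circumference {V : Type*} [Fintype V] (G : SimpleGraph V)
    [DecidableRel G.Adj] (h2 : TwoConnected G) :
    ∃ (v : V) (C : G.Walk v v), C.IsCycle ∧
      min (Fintype.card V) (2 * G.minDegree) ≤ C.length :=
  dirac_circumference_general h2 fun u v _ _ ↦
    (two_mul G.minDegree).trans_le (add_le_add (G.minDegree_le_degree u) (G.minDegree_le_degree v))
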